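/- Let f : ℝⁿ → ℝⁿ be locally Lipschitz, let x* satisfy f(x*) = 0, let 0 < μ ≤ 1, and assume f is μ-order semismooth and regular at x*. Then there exist δ > 0 and C > 0 such that for every x₀ ∈ B_δ(x*) \ {x*}, every sequence {x_k} with x_{k+1} = x_k − V_k⁻¹ f(x_k) for some V_k ∈ ∂f(x_k) is well-defined, remains in B_δ(x*), converges to x*, and satisfies ‖x_{k+1} − x*‖ ≤ C ‖x_k − x*‖^{1+μ} for all k ≥ 0. -/

import Mathlib

open Metric Filter Topology

noncomputable section

/-- The Clarke generalized Jacobian of `f : ℝⁿ → ℝⁿ` at `p`: the convex hull of all limits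
of Jacobians `Df(p_k)` along sequences of differentiability points `p_k → p`. -/
def clarkeJacobian {n : ℕ} (f : EuclideanSpace ℝ (Fin n) → EuclideanSpace ℝ (Fin n))
    (p : EuclideanSpace ℝ (Fin n)) :
    Set (EuclideanSpace ℝ (Fin n) →L[ℝ] EuclideanSpace ℝ (Fin n)) :=
  convexHull ℝ {H | ∃ u : ℕ → EuclideanSpace ℝ (Fin n),
    (∀ k, DifferentiableAt ℝ f (u k)) ∧ Tendsto u atTop (𝓝 p) ∧
    Tendsto (fun k => fderiv ℝ f (u k)) atTop (𝓝 H)}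

lemma aux_compact_hull {F : Type*} [NormedAddCommGroup F] [NormedSpace ℝ F]
    [FiniteDimensional ℝ F] {K : Set F} (hK : IsCompact K) : IsCompact (convexHull ℝ K) := by
  have key : convexHull ℝ K = ⋃ m ∈ Finset.range (Module.finrank ℝ F + 2),
      (fun q : (Fin m → ℝ) × (Fin m → F) => ∑ i, q.1 i • q.2 i) ''
        (stdSimplex ℝ (Fin m) ×ˢ Set.univ.pi (fun _ => K)) := by
    apply Set.Subset.antisymm
    · intro x hx
      obtain ⟨ι, hι, z, w, hz, hind, hw, hw1, hs⟩ := eq_pos_convex_span_of_mem_convexHull hx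
      have hc : Fintype.card ι ≤ Module.finrank ℝ F + 1 :=
        hind.card_le_finrank_succ.trans (by
          have := Submodule.finrank_le (vectorSpan ℝ (Set.range z))
          omega)
      let e := Fintype.equivFin ι
      simp only [Set.mem_iUnion]
      refine ⟨Fintype.card ι, by simp; omega, ⟨fun i => w (e.symm i), fun i => z (e.symm i)⟩,
        ⟨⟨fun i => (hw _).le, ?_⟩, fun i _ => hz (Set.mem_range_self _)⟩, ?_⟩
      · rw [← hw1]; exact Equiv.sum_comp e.symm w
      · rw [← hs]; exact Equiv.sum_comp e.symm (fun i => w i • z i)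
    · intro x hx
      simp only [Set.mem_iUnion] at hx
      obtain ⟨m, -, q, ⟨⟨h0, h1⟩, h2⟩, rfl⟩ := hx
      exact (convex_convexHull ℝ K).sum_mem (fun i _ => h0 i) h1
        (fun i _ => subset_convexHull ℝ K (h2 i (Set.mem_univ _)))
  rw [key]
  refine Finset.isCompact_biUnion _ fun m _ => ?_
  refine ((isCompact_stdSimplex ℝ (Fin m)).prod (isCompact_univ_pi fun _ => hK)).image ?_
  fun_prop

/-- limits of Jacobians -/
def limJac {n : ℕ} (f : EuclideanSpace ℝ (Fin n) → EuclideanSpace ℝ (Fin n))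
    (p : EuclideanSpace ℝ (Fin n)) :
    Set (EuclideanSpace ℝ (Fin n) →L[ℝ] EuclideanSpace ℝ (Fin n)) :=
  {H | ∃ u : ℕ → EuclideanSpace ℝ (Fin n),
    (∀ k, DifferentiableAt ℝ f (u k)) ∧ Tendsto u atTop (𝓝 p) ∧
    Tendsto (fun k => fderiv ℝ f (u k)) atTop (𝓝 H)}

lemma mem_limJac {n : ℕ} (f : EuclideanSpace ℝ (Fin n) → EuclideanSpace ℝ (Fin n))
    (p : EuclideanSpace ℝ (Fin n))
    (H : EuclideanSpace ℝ (Fin n) →L[ℝ] EuclideanSpace ℝ (Fin n)) :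
    H ∈ limJac f p ↔ ∀ η > 0, ∃ u, DifferentiableAt ℝ f u ∧ dist u p < η ∧
      dist (fderiv ℝ f u) H < η := by
  constructor
  · rintro ⟨u, hd, hu, hH⟩ η hη
    obtain ⟨k, h1, h2⟩ := ((Metric.tendsto_nhds.1 hu η hη).and (Metric.tendsto_nhds.1 hH η hη)).exists
    exact ⟨u k, hd k, h1, h2⟩
  · intro h
    choose u hd h1 h2 using fun k : ℕ => h (1 / ((k : ℝ) + 1)) (by positivity)
    refine ⟨u, hd, ?_, ?_⟩
    · exact tendsto_iff_dist_tendsto_zero.2 (squeeze_zero (fun _ => dist_nonneg)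
        (fun k => (h1 k).le) tendsto_one_div_add_atTop_nhds_zero_nat)
    · exact tendsto_iff_dist_tendsto_zero.2 (squeeze_zero (fun _ => dist_nonneg)
        (fun k => (h2 k).le) tendsto_one_div_add_atTop_nhds_zero_nat)

lemma limJac_closed {n : ℕ} (f : EuclideanSpace ℝ (Fin n) → EuclideanSpace ℝ (Fin n))
    (p : EuclideanSpace ℝ (Fin n)) : IsClosed (limJac f p) := by
  rw [← closure_subset_iff_isClosed]
  intro H hH
  rw [mem_limJac]
  intro η hη
  obtain ⟨G, hG, hGH⟩ := Metric.mem_closure_iff.1 hH (η / 2) (by positivity)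
  obtain ⟨u, h1, h2, h3⟩ := (mem_limJac f p G).1 hG (η / 2) (by positivity)
  refine ⟨u, h1, by linarith, ?_⟩
  have := dist_triangle (fderiv ℝ f u) G H
  rw [dist_comm G H] at this
  linarith

lemma aux_bound {n : ℕ} (f : EuclideanSpace ℝ (Fin n) → EuclideanSpace ℝ (Fin n))
    (hf : LocallyLipschitz f) (p : EuclideanSpace ℝ (Fin n)) :
    ∃ L : ℝ, ∃ δ > 0, ∀ u, dist u p < δ → ‖fderiv ℝ f u‖ ≤ L := by
  obtain ⟨L, t, ht, hL⟩ := hf p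
  obtain ⟨δ, hδ, hs⟩ := Metric.mem_nhds_iff.1 ht
  refine ⟨L, δ, hδ, fun u hu => ?_⟩
  exact norm_fderiv_le_of_lipschitzOn ℝ (isOpen_ball.mem_nhds (mem_ball.2 hu)) (hL.mono hs)

lemma limJac_compact {n : ℕ} (f : EuclideanSpace ℝ (Fin n) → EuclideanSpace ℝ (Fin n))
    (hf : LocallyLipschitz f) (p : EuclideanSpace ℝ (Fin n)) : IsCompact (limJac f p) := by
  haveI : ProperSpace (EuclideanSpace ℝ (Fin n) →L[ℝ] EuclideanSpace ℝ (Fin n)) :=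
    FiniteDimensional.proper ℝ _
  obtain ⟨L, δ, hδ, hL⟩ := aux_bound f hf p
  refine (isCompact_closedBall
    (0 : EuclideanSpace ℝ (Fin n) →L[ℝ] EuclideanSpace ℝ (Fin n)) (L + 1)).of_isClosed_subset
    (limJac_closed f p) fun H hH => ?_
  obtain ⟨u, -, h2, h3⟩ := (mem_limJac f p H).1 hH (min δ 1) (by positivity)
  have h4 := hL u (h2.trans_le (min_le_left _ _))
  have h5 := h3.trans_le (min_le_right _ _)
  rw [mem_closedBall_zero_iff]
  rw [dist_comm, dist_eq_norm] at h5
  have := norm_le_norm_add_norm_sub (fderiv ℝ f u) H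
  rw [norm_sub_rev] at h5
  linarith

lemma aux_usc {n : ℕ} (f : EuclideanSpace ℝ (Fin n) → EuclideanSpace ℝ (Fin n))
    (hf : LocallyLipschitz f) (p : EuclideanSpace ℝ (Fin n)) (η : ℝ) (hη : 0 < η) :
    ∃ δ > 0, ∀ u, dist u p < δ → DifferentiableAt ℝ f u →
      fderiv ℝ f u ∈ thickening η (limJac f p) := by
  haveI : ProperSpace (EuclideanSpace ℝ (Fin n) →L[ℝ] EuclideanSpace ℝ (Fin n)) :=
    FiniteDimensional.proper ℝ _
  obtain ⟨L, δ, hδ, hL⟩ := aux_bound f hf p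
  by_contra! hcon
  choose u h1 h2 h3 using fun k : ℕ => hcon (min δ (1 / ((k : ℝ) + 1))) (by positivity)
  have hu : Tendsto u atTop (𝓝 p) :=
    tendsto_iff_dist_tendsto_zero.2 (squeeze_zero (fun _ => dist_nonneg)
        (fun k => ((h1 k).trans_le (min_le_right _ _)).le)
        tendsto_one_div_add_atTop_nhds_zero_nat)
  obtain ⟨H, -, φ, hφ, hH⟩ := (isCompact_closedBall
    (0 : EuclideanSpace ℝ (Fin n) →L[ℝ] EuclideanSpace ℝ (Fin n)) L).tendsto_subseq
    (x := fun k => fderiv ℝ f (u k))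
    (fun k => mem_closedBall_zero_iff.2 (hL _ ((h1 k).trans_le (min_le_left _ _))))
  have hmem : H ∈ limJac f p := ⟨u ∘ φ, fun k => h2 _, hu.comp hφ.tendsto_atTop, hH⟩
  obtain ⟨k, hk⟩ := (Metric.tendsto_nhds.1 hH η hη).exists
  exact h3 _ (mem_thickening_iff.2 ⟨H, hmem, hk⟩)

lemma aux_inv {n : ℕ} (f : EuclideanSpace ℝ (Fin n) → EuclideanSpace ℝ (Fin n))
    (hf : LocallyLipschitz f) (xs : EuclideanSpace ℝ (Fin n))
    (hreg : ∀ V ∈ clarkeJacobian f xs, IsUnit V) :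
    ∃ M > 0, ∃ δ > 0, ∀ p ∈ ball xs δ, ∀ V ∈ clarkeJacobian f p,
      IsUnit V ∧ ‖Ring.inverse V‖ ≤ M := by
  have hC : IsCompact (clarkeJacobian f xs) := aux_compact_hull (limJac_compact f hf xs)
  have hcont : ContinuousOn (fun V : EuclideanSpace ℝ (Fin n) →L[ℝ] EuclideanSpace ℝ (Fin n) =>
      Ring.inverse V) {V | IsUnit V} := by
    rintro V ⟨v, rfl⟩
    exact (NormedRing.inverse_continuousAt v).continuousWithinAt
  obtain ⟨M, hM⟩ := hC.exists_bound_of_continuousOn (hcont.mono hreg)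
  have hU : IsOpen ({V : EuclideanSpace ℝ (Fin n) →L[ℝ] EuclideanSpace ℝ (Fin n) | IsUnit V} ∩
      (fun V => ‖Ring.inverse V‖) ⁻¹' Set.Iio (|M| + 1)) :=
    hcont.norm.isOpen_inter_preimage Units.isOpen isOpen_Iio
  obtain ⟨η, hη, hsub⟩ := hC.exists_thickening_subset_open hU (fun V hV =>
    ⟨hreg V hV, by
      have := hM V hV
      have := le_abs_self M
      simp only [Set.mem_preimage, Set.mem_Iio]
      linarith⟩)
  obtain ⟨δ, hδ, hd⟩ := aux_usc f hf xs (η / 2) (by positivity)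
  refine ⟨|M| + 1, by positivity, δ, hδ, fun p hp V hV => ?_⟩
  have h1 : clarkeJacobian f p ⊆ thickening η (clarkeJacobian f xs) := by
    refine convexHull_min ?_ ((convex_convexHull ℝ _).thickening η)
    intro H hH
    obtain ⟨u, a, b, c⟩ := (mem_limJac f p H).1 hH (min (η / 2) (δ - dist p xs))
      (lt_min (by positivity) (sub_pos.2 hp))
    have b' := b.trans_le (min_le_right _ _)
    have c' := c.trans_le (min_le_left _ _)
    have := dist_triangle u p xs
    obtain ⟨G, hG, hGd⟩ := mem_thickening_iff.1 (hd u (by linarith) a)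
    refine mem_thickening_iff.2 ⟨G, subset_convexHull ℝ _ hG, ?_⟩
    have := dist_triangle H (fderiv ℝ f u) G
    rw [dist_comm H (fderiv ℝ f u)] at this
    linarith
  have h2 := hsub (h1 hV)
  exact ⟨h2.1, le_of_lt h2.2⟩

/-- Local convergence of order `1 + μ` of the Newton method for a `μ`-order semismooth map
that is regular at a zero `x*` (Euclidean case of the second part of Theorem 4.3). -/
theorem newton_mu_order_convergence {n : ℕ}
    (f : EuclideanSpace ℝ (Fin n) → EuclideanSpace ℝ (Fin n)) (hf : LocallyLipschitz f)
    (xs : EuclideanSpace ℝ (Fin n)) (hxs : f xs = 0)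
    (μ : ℝ) (hμ0 : 0 < μ) (hμ1 : μ ≤ 1)
    -- `f` is directionally differentiable near `x*`:
    (hdir : ∃ δ₀ > (0 : ℝ), ∀ p ∈ ball xs δ₀, ∀ v : EuclideanSpace ℝ (Fin n),
      ∃ d : EuclideanSpace ℝ (Fin n),
        Tendsto (fun t : ℝ => t⁻¹ • (f (p + t • v) - f p)) (𝓝[>] (0 : ℝ)) (𝓝 d))
    -- `μ`-order semismoothness estimate at `x*`:
    (hss : ∃ ε > (0 : ℝ), ∃ δ > (0 : ℝ), ∀ p ∈ ball xs δ, ∀ V ∈ clarkeJacobian f p,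
      ‖f xs - f p - V (xs - p)‖ ≤ ε * ‖p - xs‖ ^ (1 + μ))
    -- regularity at `x*`:
    (hreg : ∀ V ∈ clarkeJacobian f xs, IsUnit V) :
    ∃ δ > (0 : ℝ), ∃ C > (0 : ℝ), ∀ x₀ ∈ ball xs δ, x₀ ≠ xs →
      ∀ (x : ℕ → EuclideanSpace ℝ (Fin n))
        (V : ℕ → (EuclideanSpace ℝ (Fin n) →L[ℝ] EuclideanSpace ℝ (Fin n))),
        x 0 = x₀ → (∀ k, V k ∈ clarkeJacobian f (x k)) →
        (∀ k, x (k + 1) = x k - Ring.inverse (V k) (f (x k))) →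
        (∀ k, IsUnit (V k)) ∧ (∀ k, x k ∈ ball xs δ) ∧
        Tendsto x atTop (𝓝 xs) ∧
        ∀ k, ‖x (k + 1) - xs‖ ≤ C * ‖x k - xs‖ ^ (1 + μ) := by
  obtain ⟨M, hM, δ₁, hδ₁, h1⟩ := aux_inv f hf xs hreg
  obtain ⟨ε, hε, δ₂, hδ₂, h2⟩ := hss
  set C := M * ε with hCdef
  have hC : 0 < C := by positivity
  set r := (1 / (2 * C)) ^ (1 / μ) with hr
  have hr0 : 0 < r := by positivity
  have hrμ : r ^ μ = 1 / (2 * C) := by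
    rw [hr, ← Real.rpow_mul (by positivity), one_div_mul_cancel hμ0.ne', Real.rpow_one]
  refine ⟨min r (min δ₁ δ₂), by positivity, C, hC, ?_⟩
  intro x₀ hx₀ _ x V hx hV hstep
  have main : ∀ k, x k ∈ ball xs (min r (min δ₁ δ₂)) →
      ‖x (k + 1) - xs‖ ≤ C * ‖x k - xs‖ ^ (1 + μ) ∧
      ‖x (k + 1) - xs‖ ≤ (1 / 2) * ‖x k - xs‖ := by
    intro k hk
    have hk' := mem_ball.1 hk
    have hkr := hk'.trans_le (min_le_left _ _)
    have hk1 := hk'.trans_le ((min_le_right _ _).trans (min_le_left _ _))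
    have hk2 := hk'.trans_le ((min_le_right _ _).trans (min_le_right _ _))
    obtain ⟨hu, hn⟩ := h1 _ hk1 _ (hV k)
    have hs := h2 _ hk2 _ (hV k)
    have hinv : ∀ y, Ring.inverse (V k) (V k y) = y := fun y => by
      have := congrArg (fun T : EuclideanSpace ℝ (Fin n) →L[ℝ] EuclideanSpace ℝ (Fin n) => T y)
        (Ring.inverse_mul_cancel _ hu)
      simpa using this
    have heq : x (k + 1) - xs = Ring.inverse (V k) (f xs - f (x k) - V k (xs - x k)) := by
      rw [map_sub, hinv, hstep, hxs, zero_sub, map_neg]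
      abel
    have hA : ‖x (k + 1) - xs‖ ≤ C * ‖x k - xs‖ ^ (1 + μ) := by
      rw [heq, hCdef, mul_assoc]
      exact (ContinuousLinearMap.le_opNorm _ _).trans
        (mul_le_mul hn hs (norm_nonneg _) hM.le)
    refine ⟨hA, hA.trans ?_⟩
    rw [dist_eq_norm] at hkr
    have h3 : ‖x k - xs‖ ^ μ ≤ 1 / (2 * C) := by
      rw [← hrμ]
      exact Real.rpow_le_rpow (norm_nonneg _) hkr.le hμ0.le
    rw [Real.rpow_add_of_nonneg (norm_nonneg _) zero_le_one hμ0.le, Real.rpow_one]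
    calc C * (‖x k - xs‖ * ‖x k - xs‖ ^ μ) ≤ C * (‖x k - xs‖ * (1 / (2 * C))) := by gcongr
      _ = (1 / 2) * ‖x k - xs‖ := by field_simp
  have hball : ∀ k, x k ∈ ball xs (min r (min δ₁ δ₂)) := by
    intro k
    induction k with
    | zero => rw [hx]; exact hx₀
    | succ k ih =>
      have h3 := (main k ih).2
      rw [mem_ball, dist_eq_norm] at ih ⊢
      have := norm_nonneg (x k - xs)
      linarith
  refine ⟨fun k => (h1 _ ((mem_ball.1 (hball k)).trans_le
    ((min_le_right _ _).trans (min_le_left _ _))) _ (hV k)).1, hball, ?_,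
    fun k => (main k (hball k)).1⟩
  have hgeo : ∀ k, ‖x k - xs‖ ≤ (1 / 2 : ℝ) ^ k * ‖x 0 - xs‖ := by
    intro k
    induction k with
    | zero => simp
    | succ k ih =>
      have h3 := (main k (hball k)).2
      rw [pow_succ]
      linarith
  rw [tendsto_iff_norm_sub_tendsto_zero]
  refine squeeze_zero (fun _ => norm_nonneg _) hgeo ?_
  simpa using (tendsto_pow_atTop_nhds_zero_of_lt_one (r := (1 / 2 : ℝ)) (by norm_num)
    (by norm_num)).mul_const ‖x 0 - xs‖
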